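/- arXiv:2209.13259 — 9 statements merged into one kernel-verified Lean document; each statement's English description precedes it below -/
import Mathlib

section
/- Let μ_t, μ_c, λ be real numbers with 0 < λ < μ_t and λ < μ_c. For x, y > 0 define g(x,y) = μ_t·exp(−μ_t y)·exp(−(μ_t−λ)x) + (μ_t(μ_t−λ)/(2μ_t−λ)) · h(x,y), where h(x,y) = exp(−(μ_t−λ)x)·(exp((μ_t−λ)y) − exp(−μ_t y)) if y ≤ x and h(x,y) = (exp(μ_t x) − exp(−(μ_t−λ)x))·exp(−μ_t y) if y > x. Then ∫₀^∞ ∫₀^∞ ∫₀^∞ x · t · (μ_c−λ)·exp(−(μ_c−λ)(t+y)) · g(x,y) · λ·exp(−λx) dt dy dx = λ/(μ_c²(μ_c−λ)) + λ/(μ_t μ_c (μ_t + μ_c − λ)). -/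
open MeasureTheory Real Set

lemma aux_one (r : ℝ) (hr : 0 < r) : IntegrableOn (fun x : ℝ => x * exp (-(r * x))) (Ioi 0) ∧
    ∫ x in Ioi (0:ℝ), x * exp (-(r * x)) = 1 / r ^ 2 := by
  have hI : IntegrableOn (fun x : ℝ => x * exp (-(r * x))) (Ioi 0) := by
    have := integrableOn_rpow_mul_exp_neg_mul_rpow (p := 1) (s := 1) (b := r) (by norm_num) (by norm_num) hr
    simpa using this
  refine ⟨hI, ?_⟩
  have := integral_rpow_mul_exp_neg_mul_Ioi (a := 2) (r := r) (by norm_num) hr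
  have h2 : (2:ℝ) - 1 = 1 := by norm_num
  rw [h2] at this
  simp only [rpow_one, Gamma_two, mul_one, rpow_two] at this
  rw [this, one_div_pow]

lemma aux_two (r : ℝ) (hr : 0 < r) : IntegrableOn (fun x : ℝ => x ^ 2 * exp (-(r * x))) (Ioi 0) ∧
    ∫ x in Ioi (0:ℝ), x ^ 2 * exp (-(r * x)) = 2 / r ^ 3 := by
  have hI : IntegrableOn (fun x : ℝ => x ^ 2 * exp (-(r * x))) (Ioi 0) := by
    have := integrableOn_rpow_mul_exp_neg_mul_rpow (p := 1) (s := 2) (b := r) (by norm_num) (by norm_num) hr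
    simpa using this
  refine ⟨hI, ?_⟩
  have := integral_rpow_mul_exp_neg_mul_Ioi (a := 3) (r := r) (by norm_num) hr
  have h2 : (3:ℝ) - 1 = 2 := by norm_num
  have h3 : Gamma 3 = 2 := by
    rw [show (3:ℝ) = 2 + 1 by norm_num, Gamma_add_one (by norm_num), Gamma_two, mul_one]
  rw [h2, h3] at this
  simp only [rpow_two] at this
  rw [this]
  have : (1 / r) ^ (3:ℝ) = (1 / r) ^ 3 := by exact_mod_cast rpow_natCast (1 / r) 3
  rw [this]; field_simp

/-- the truncated exponential integral -/
noncomputable def GG (k x : ℝ) : ℝ := if k = 0 then x else (exp (k * x) - 1) / k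

lemma aux_GG (k x : ℝ) : ∫ y in (0:ℝ)..x, exp (k * y) = GG k x := by
  unfold GG
  split_ifs with h
  · simp [h]
  · rw [intervalIntegral.integral_comp_mul_left (fun y => exp y) h]
    simp; field_simp

lemma aux_G (m k : ℝ) (hm : 0 < m) (hk : k < m) :
    IntegrableOn (fun x : ℝ => x * exp (-(m * x)) * GG k x) (Ioi 0) ∧
    ∫ x in Ioi (0:ℝ), x * exp (-(m * x)) * GG k x = 1 / (m * (m - k) ^ 2) + 1 / (m ^ 2 * (m - k)) := by
  have hmk : 0 < m - k := by linarith
  by_cases h : k = 0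
  · subst h
    have e : (fun x : ℝ => x * exp (-(m * x)) * GG 0 x) = fun x => x ^ 2 * exp (-(m * x)) := by
      funext x; simp [GG]; ring
    rw [e]
    refine ⟨(aux_two m hm).1, ?_⟩
    rw [(aux_two m hm).2]; simp; field_simp; norm_num
  · have e : (fun x : ℝ => x * exp (-(m * x)) * GG k x) =
        fun x => k⁻¹ * (x * exp (-((m - k) * x)) - x * exp (-(m * x))) := by
      funext x
      have : exp (-((m - k) * x)) = exp (-(m * x)) * exp (k * x) := by
        rw [← exp_add]; congr 1; ring
      simp only [GG, h, if_false, this]; field_simp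
    rw [e]
    refine ⟨((aux_one _ hmk).1.sub (aux_one m hm).1).const_mul _, ?_⟩
    rw [integral_const_mul, integral_sub (aux_one _ hmk).1 (aux_one m hm).1, (aux_one _ hmk).2,
      (aux_one m hm).2]
    field_simp; ring

lemma aux_t (a x y G L : ℝ) (ha : 0 < a) :
    ∫ t in Ioi (0:ℝ), x * t * (a * exp (-(a * (t + y)))) * G * L
      = x * L / a * (exp (-(a * y)) * G) := by
  have e : (fun t : ℝ => x * t * (a * exp (-(a * (t + y)))) * G * L) =
      fun t => (x * a * exp (-(a * y)) * G * L) * (t * exp (-(a * t))) := by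
    funext t
    have : exp (-(a * (t + y))) = exp (-(a * t)) * exp (-(a * y)) := by
      rw [← exp_add]; congr 1; ring
    rw [this]; ring
  rw [e, integral_const_mul, (aux_one a ha).2]
  field_simp

lemma aux_y (m a b x : ℝ) (hm : 0 < m) (ha : 0 < a) (hx : 0 < x) (C : ℝ) :
    ∫ y in Ioi (0:ℝ), exp (-(a * y)) * (m * exp (-(m * y)) * exp (-(b * x))
        + C * (if y ≤ x then exp (-(b * x)) * (exp (b * y) - exp (-(m * y)))
           else (exp (m * x) - exp (-(b * x))) * exp (-(m * y))))
      = m / (m + a) * exp (-(b * x)) + C * (exp (-(b * x)) * GG (b - a) x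
          - exp (-(b * x)) / (m + a) + exp (-(a * x)) / (m + a)) := by
  have hma : 0 < m + a := by linarith
  set F := fun y : ℝ => exp (-(a * y)) * (m * exp (-(m * y)) * exp (-(b * x))
        + C * (if y ≤ x then exp (-(b * x)) * (exp (b * y) - exp (-(m * y)))
           else (exp (m * x) - exp (-(b * x))) * exp (-(m * y)))) with hF
  have e1 : ∀ y, exp (-(a * y)) * exp (-(m * y)) = exp (-(m + a) * y) := by
    intro y; rw [← exp_add]; congr 1; ring
  have e2 : ∀ y, exp (-(a * y)) * exp (b * y) = exp ((b - a) * y) := by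
    intro y; rw [← exp_add]; congr 1; ring
  have f1 : EqOn F (fun y => (m * exp (-(b * x)) - C * exp (-(b * x))) * exp (-(m + a) * y)
      + C * exp (-(b * x)) * exp ((b - a) * y)) (Ioc 0 x) := by
    intro y hy
    simp only [hF, hy.2, if_true, ← e1, ← e2]; ring
  have f2 : EqOn F (fun y => (m * exp (-(b * x)) + C * (exp (m * x) - exp (-(b * x))))
      * exp (-(m + a) * y)) (Ioi x) := by
    intro y hy
    have : ¬ y ≤ x := not_le.mpr hy
    simp only [hF, this, if_false, ← e1]; ring
  have i1 : IntegrableOn F (Ioc 0 x) := by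
    rw [integrableOn_congr_fun f1 measurableSet_Ioc]
    exact (Continuous.integrableOn_Ioc (by fun_prop))
  have i2 : IntegrableOn F (Ioi x) := by
    rw [integrableOn_congr_fun f2 measurableSet_Ioi]
    exact (integrableOn_exp_mul_Ioi (by linarith) x).const_mul _
  rw [← Ioc_union_Ioi_eq_Ioi hx.le, setIntegral_union (Ioc_disjoint_Ioi le_rfl) measurableSet_Ioi i1 i2,
    setIntegral_congr_fun measurableSet_Ioc f1, setIntegral_congr_fun measurableSet_Ioi f2,
    integral_const_mul, integral_exp_mul_Ioi (by linarith), ← intervalIntegral.integral_of_le hx.le,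
    intervalIntegral.integral_add (Continuous.intervalIntegrable (by fun_prop) _ _)
      (Continuous.intervalIntegrable (by fun_prop) _ _),
    intervalIntegral.integral_const_mul, intervalIntegral.integral_const_mul, aux_GG, aux_GG]
  have hne : -(m + a) ≠ 0 := by linarith
  have e3 : exp (-(a * x)) = exp (m * x) * exp (-(m + a) * x) := by
    rw [← exp_add]; congr 1; ring
  have e4 : GG (-(m + a)) x = (1 - exp (-(m + a) * x)) / (m + a) := by
    simp only [GG, hne, if_false]; rw [div_neg, ← neg_div]; congr 1; ring
  rw [e3, e4, neg_div_neg_eq]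
  field_simp
  ring

/-- E[X_n W_{n,c}] in the M/M/1–M/M/1 tandem (equation (19)). -/
theorem stmt_2 (μt μc lam : ℝ) (hlam : 0 < lam) (ht : lam < μt) (hc : lam < μc)
    (g : ℝ → ℝ → ℝ)
    (hg : ∀ x y : ℝ, 0 < x → 0 < y →
      g x y = μt * exp (-(μt * y)) * exp (-((μt - lam) * x))
        + μt * (μt - lam) / (2 * μt - lam) *
          (if y ≤ x then exp (-((μt - lam) * x)) * (exp ((μt - lam) * y) - exp (-(μt * y)))
           else (exp (μt * x) - exp (-((μt - lam) * x))) * exp (-(μt * y)))) :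
    ∫ x in Ioi (0:ℝ), ∫ y in Ioi (0:ℝ), ∫ t in Ioi (0:ℝ),
        x * t * ((μc - lam) * exp (-((μc - lam) * (t + y)))) * g x y * (lam * exp (-(lam * x)))
      = lam / (μc ^ 2 * (μc - lam)) + lam / (μt * μc * (μt + μc - lam)) := by
  have ha : 0 < μc - lam := by linarith
  have hb : 0 < μt - lam := by linarith
  have hm : 0 < μt := by linarith
  have hc0 : 0 < μc := by linarith
  obtain ⟨C, hC⟩ : ∃ C, C = μt * (μt - lam) / (2 * μt - lam) := ⟨_, rfl⟩
  have key : EqOn (fun x => ∫ y in Ioi (0:ℝ), ∫ t in Ioi (0:ℝ),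
        x * t * ((μc - lam) * exp (-((μc - lam) * (t + y)))) * g x y * (lam * exp (-(lam * x))))
      (fun x => lam / (μc - lam) * ((μt / (μt + (μc - lam)) - C / (μt + (μc - lam))) *
          (x * exp (-(μt * x))) + C * (x * exp (-(μt * x)) * GG (μt - μc) x)
          + C / (μt + (μc - lam)) * (x * exp (-(μc * x))))) (Ioi 0) := by
    intro x hx
    have hx : 0 < x := hx
    simp only [aux_t _ _ _ _ _ ha]
    rw [integral_const_mul]
    have h1 := aux_y μt (μc - lam) (μt - lam) x hm ha hx C
    rw [hC] at h1
    have h0 := setIntegral_congr_fun (μ := volume) (f := fun y => exp (-((μc - lam) * y)) * g x y)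
      measurableSet_Ioi (fun y (hy : y ∈ Ioi (0:ℝ)) =>
        congrArg (fun z => exp (-((μc - lam) * y)) * z) (hg x y hx hy))
    rw [h0, h1, ← hC]
    have e1 : exp (-(μt * x)) = exp (-(lam * x)) * exp (-((μt - lam) * x)) := by
      rw [← exp_add]; congr 1; ring
    have e2 : exp (-(μc * x)) = exp (-(lam * x)) * exp (-((μc - lam) * x)) := by
      rw [← exp_add]; congr 1; ring
    have e3 : μt - lam - (μc - lam) = μt - μc := by ring
    rw [e1, e2, e3]
    ring
  have I1 := aux_one μt hm
  have I2 := aux_one μc hc0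
  have I3 := aux_G μt (μt - μc) hm (by linarith)
  have I4 : IntegrableOn (fun x => (μt / (μt + (μc - lam)) - C / (μt + (μc - lam))) *
          (x * exp (-(μt * x))) + C * (x * exp (-(μt * x)) * GG (μt - μc) x)) (Ioi 0) :=
    (I1.1.const_mul _).add (I3.1.const_mul _)
  rw [setIntegral_congr_fun measurableSet_Ioi key, integral_const_mul, integral_add
    I4 (I2.1.const_mul _), integral_add
    (I1.1.const_mul _) (I3.1.const_mul _), integral_const_mul, integral_const_mul,
    integral_const_mul, I1.2, I2.2, I3.2, hC]
  have h1 : 2 * μt - lam ≠ 0 := by linarith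
  have h1b : μt * 2 - lam ≠ 0 := by linarith
  have h3 : μt + μc - lam ≠ 0 := by linarith
  have h4 : μt - (μt - μc) = μc := by ring
  have h5 : μt + (μc - lam) = μt + μc - lam := by ring
  rw [h4, h5]
  have h6 : μc - lam ≠ 0 := ha.ne'
  field_simp
  ring_nf
end

section
/- Let μ_t, μ_c, λ be real numbers with 0 < λ < μ_t and λ < μ_c. Let I_t = ∫₀^∞ ∫₀^∞ x·t·(μ_t−λ)·exp(−(μ_t−λ)(t+x))·λ·exp(−λx) dt dx, and let I_c = ∫₀^∞ ∫₀^∞ ∫₀^∞ x·t·(μ_c−λ)·exp(−(μ_c−λ)(t+y))·g(x,y)·λ·exp(−λx) dt dy dx, where g(x,y) = μ_t·exp(−μ_t y)·exp(−(μ_t−λ)x) + (μ_t(μ_t−λ)/(2μ_t−λ))·h(x,y) with h(x,y) = exp(−(μ_t−λ)x)·(exp((μ_t−λ)y) − exp(−μ_t y)) if y ≤ x and h(x,y) = (exp(μ_t x) − exp(−(μ_t−λ)x))·exp(−μ_t y) if y > x. Then λ·(I_t + I_c) + 1/μ_t + 1/μ_c + 1/λ = λ²/(μ_t²(μ_t−λ))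 + 1/μ_t + λ²/(μ_c²(μ_c−λ)) + 1/μ_c + λ²/(μ_t μ_c (μ_t + μ_c − λ)) + 1/λ. -/
open MeasureTheory Real Set

lemma aux_int (n : ℕ) (r : ℝ) (hr : 0 < r) :
    ∫ x in Ioi (0:ℝ), x ^ n * exp (-(r * x)) = n.factorial / r ^ (n + 1) := by
  have h := Real.integral_rpow_mul_exp_neg_mul_Ioi (a := (n:ℝ) + 1) (r := r) (by positivity) hr
  rw [Real.Gamma_nat_eq_factorial] at h
  have e : (1 / r) ^ ((n:ℝ) + 1) = 1 / r ^ (n + 1) := by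
    rw [show ((n:ℝ) + 1) = ((n + 1 : ℕ) : ℝ) by push_cast; ring, Real.rpow_natCast, one_div_pow]
  rw [e] at h
  rw [div_eq_mul_one_div, mul_comm, ← h]
  refine setIntegral_congr_fun measurableSet_Ioi fun x _ => ?_
  simp

lemma aux_integrable (n : ℕ) (r : ℝ) (hr : 0 < r) :
    IntegrableOn (fun x => x ^ n * exp (-(r * x))) (Ioi (0:ℝ)) := by
  apply Integrable.of_integral_ne_zero
  rw [aux_int n r hr]
  positivity

/-- inner t integral -/
lemma aux_t_s3 (b C : ℝ) (hb : 0 < b) :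
    ∫ t in Ioi (0:ℝ), C * (t ^ 1 * exp (-(b * t))) = C / b ^ 2 := by
  rw [integral_const_mul, aux_int 1 b hb]
  simp; ring

lemma aux_y_s3 (s d x A B A' J : ℝ) (hs : 0 < s) (hx : 0 < x)
    (hJ : ∫ y in (0:ℝ)..x, exp (d * y) = J) (f : ℝ → ℝ)
    (h1 : ∀ y ∈ Ioc 0 x, f y = A * exp (-s * y) + B * exp (d * y))
    (h2 : ∀ y ∈ Ioi x, f y = A' * exp (-s * y)) :
    ∫ y in Ioi (0:ℝ), f y = A * (1 - exp (-s * x)) / s + B * J + A' * exp (-s * x) / s := by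
  have c1 : Continuous fun y : ℝ => A * exp (-s * y) := by fun_prop
  have c2 : Continuous fun y : ℝ => B * exp (d * y) := by fun_prop
  have i1 : IntegrableOn f (Ioc 0 x) := by
    rw [integrableOn_congr_fun h1 measurableSet_Ioc]
    exact (c1.add c2).integrableOn_Ioc
  have i2 : IntegrableOn f (Ioi x) := by
    rw [integrableOn_congr_fun h2 measurableSet_Ioi]
    exact (integrableOn_exp_mul_Ioi (by linarith) x).const_mul A'
  have J0 : ∫ y in (0:ℝ)..x, exp (-s * y) = (1 - exp (-s * x)) / s := by
    have hs0 : -s ≠ 0 := by simpa using hs.ne'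
    rw [intervalIntegral.integral_comp_mul_left (fun z => exp z) hs0, integral_exp]
    simp; field_simp; ring
  rw [← Ioc_union_Ioi_eq_Ioi hx.le, setIntegral_union (Ioc_disjoint_Ioi le_rfl) measurableSet_Ioi i1 i2,
    setIntegral_congr_fun measurableSet_Ioc h1, setIntegral_congr_fun measurableSet_Ioi h2,
    ← intervalIntegral.integral_of_le hx.le,
    intervalIntegral.integral_add (c1.intervalIntegrable _ _) (c2.intervalIntegrable _ _),
    intervalIntegral.integral_const_mul, intervalIntegral.integral_const_mul, hJ, J0,
    integral_const_mul, integral_exp_mul_Ioi (by linarith)]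
  field_simp

lemma aux_J (d x : ℝ) (hd : d ≠ 0) :
    ∫ y in (0:ℝ)..x, exp (d * y) = (exp (d * x) - 1) / d := by
  rw [intervalIntegral.integral_comp_mul_left (fun z => exp z) hd, integral_exp]
  simp; field_simp

lemma aux_inner (m c l : ℝ) (hl : 0 < l) (hm : l < m) (hc : l < c)
    (g : ℝ → ℝ → ℝ)
    (hg : ∀ x y : ℝ, 0 < x → 0 < y →
      g x y = m * exp (-(m * y)) * exp (-((m - l) * x))
        + m * (m - l) / (2 * m - l) *
          (if y ≤ x then exp (-((m - l) * x)) * (exp ((m - l) * y) - exp (-(m * y)))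
           else (exp (m * x) - exp (-((m - l) * x))) * exp (-(m * y))))
    (x J : ℝ) (hx : 0 < x) (hJ : ∫ y in (0:ℝ)..x, exp ((m - c) * y) = J) :
    (∫ y in Ioi (0:ℝ), ∫ t in Ioi (0:ℝ),
        x * t * ((c - l) * exp (-((c - l) * (t + y)))) * g x y * (l * exp (-(l * x))))
      = l / (c - l) * (m / (m + c - l) * (x ^ 1 * exp (-(m * x)))
        + m * (m - l) / (2 * m - l) * (x * exp (-(m * x)) * J
          + (x ^ 1 * exp (-(c * x)) - x ^ 1 * exp (-(m * x))) / (m + c - l))) := by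
  have hb : 0 < c - l := by linarith
  have hK : 0 < 2 * m - l := by linarith
  have hs : 0 < m + c - l := by linarith
  have ht : ∀ y : ℝ, (∫ t in Ioi (0:ℝ),
        x * t * ((c - l) * exp (-((c - l) * (t + y)))) * g x y * (l * exp (-(l * x))))
        = l / (c - l) * x * exp (-(l * x)) * (exp (-((c - l) * y)) * g x y) := by
    intro y
    have : ∀ t : ℝ, x * t * ((c - l) * exp (-((c - l) * (t + y)))) * g x y * (l * exp (-(l * x)))
        = (x * (c - l) * exp (-((c - l) * y)) * g x y * (l * exp (-(l * x))))
          * (t ^ 1 * exp (-((c - l) * t))) := by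
      intro t
      rw [show -((c - l) * (t + y)) = -((c - l) * t) + -((c - l) * y) by ring, exp_add]
      ring
    simp_rw [this]
    rw [aux_t_s3 _ _ hb]
    field_simp
  simp_rw [ht]
  rw [integral_const_mul]
  rw [aux_y_s3 (m + c - l) (m - c) x
    (m * exp (-((m - l) * x)) - m * (m - l) / (2 * m - l) * exp (-((m - l) * x)))
    (m * (m - l) / (2 * m - l) * exp (-((m - l) * x)))
    (m * exp (-((m - l) * x)) + m * (m - l) / (2 * m - l) * (exp (m * x) - exp (-((m - l) * x))))
    J hs hx hJ]
  · have e1 : exp (-(m * x)) = exp (-(l * x)) * exp (-((m - l) * x)) := by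
      rw [← exp_add]; congr 1; ring
    have e2 : exp (-(c * x)) = exp (-(l * x)) * (exp (m * x) * exp (-(m + c - l) * x)) := by
      rw [← exp_add, ← exp_add]; congr 1; ring
    rw [e1, e2]
    generalize exp (-(l * x)) = E1
    generalize exp (-((m - l) * x)) = E2
    generalize exp (m * x) = E3
    generalize exp (-(m + c - l) * x) = E4
    field_simp
    ring
  · intro y hy
    rw [hg x y hx hy.1, if_pos hy.2]
    have e1 : exp (-(m + c - l) * y) = exp (-((c - l) * y)) * exp (-(m * y)) := by
      rw [← exp_add]; congr 1; ring
    have e2 : exp ((m - c) * y) = exp (-((c - l) * y)) * exp ((m - l) * y) := by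
      rw [← exp_add]; congr 1; ring
    rw [e1, e2]; ring
  · intro y hy
    have hy' : x < y := hy
    rw [hg x y hx (hx.trans hy'), if_neg (not_le.mpr hy')]
    have e1 : exp (-(m + c - l) * y) = exp (-((c - l) * y)) * exp (-(m * y)) := by
      rw [← exp_add]; congr 1; ring
    rw [e1]; ring

lemma aux_comb (A B C m c : ℝ) (n : ℕ) (hm : 0 < m) (hc : 0 < c) :
    ∫ x in Ioi (0:ℝ), (A * (x ^ 1 * exp (-(m * x))) + B * (x ^ 1 * exp (-(c * x)))
      + C * (x ^ 2 * exp (-(m * x)))) = A / m ^ 2 + B / c ^ 2 + C * 2 / m ^ 3 := by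
  have i1 := (aux_integrable 1 m hm).const_mul A
  have i2 := (aux_integrable 1 c hc).const_mul B
  have i3 := (aux_integrable 2 m hm).const_mul C
  have i12 : Integrable (fun x => A * (x ^ 1 * exp (-(m * x))) + B * (x ^ 1 * exp (-(c * x))))
      (volume.restrict (Ioi (0:ℝ))) := i1.add i2
  rw [integral_add i12 i3, integral_add i1 i2, integral_const_mul, integral_const_mul,
    integral_const_mul, aux_int 1 m hm, aux_int 1 c hc, aux_int 2 m hm]
  simp [Nat.factorial]
  ring

/-- Proposition 1: closed form of the timeliness of information in the
M/M/1–M/M/1 tandem (equation (3)). -/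
theorem stmt_3 (μt μc lam : ℝ) (hlam : 0 < lam) (ht : lam < μt) (hc : lam < μc)
    (g : ℝ → ℝ → ℝ)
    (hg : ∀ x y : ℝ, 0 < x → 0 < y →
      g x y = μt * exp (-(μt * y)) * exp (-((μt - lam) * x))
        + μt * (μt - lam) / (2 * μt - lam) *
          (if y ≤ x then exp (-((μt - lam) * x)) * (exp ((μt - lam) * y) - exp (-(μt * y)))
           else (exp (μt * x) - exp (-((μt - lam) * x))) * exp (-(μt * y))))
    (It Ic : ℝ)
    (hIt : It = ∫ x in Ioi (0:ℝ), ∫ t in Ioi (0:ℝ),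
        x * t * ((μt - lam) * exp (-((μt - lam) * (t + x)))) * (lam * exp (-(lam * x))))
    (hIc : Ic = ∫ x in Ioi (0:ℝ), ∫ y in Ioi (0:ℝ), ∫ t in Ioi (0:ℝ),
        x * t * ((μc - lam) * exp (-((μc - lam) * (t + y)))) * g x y * (lam * exp (-(lam * x)))) :
    lam * (It + Ic) + 1 / μt + 1 / μc + 1 / lam
      = lam ^ 2 / (μt ^ 2 * (μt - lam)) + 1 / μt + lam ^ 2 / (μc ^ 2 * (μc - lam)) + 1 / μc
        + lam ^ 2 / (μt * μc * (μt + μc - lam)) + 1 / lam := by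
  have ha : 0 < μt - lam := by linarith
  have hb : 0 < μc - lam := by linarith
  have hm0 : 0 < μt := by linarith
  have hc0 : 0 < μc := by linarith
  have hK : 0 < 2 * μt - lam := by linarith
  have hs : 0 < μt + μc - lam := by linarith
  have hK' : 2 * μt - lam ≠ 0 := hK.ne'
  have hK2 : μt * 2 - lam ≠ 0 := by rw [mul_comm]; exact hK'
  have h1 : It = lam / (μt ^ 2 * (μt - lam)) := by
    have : ∀ x t : ℝ, x * t * ((μt - lam) * exp (-((μt - lam) * (t + x)))) * (lam * exp (-(lam * x)))
        = (lam * (μt - lam) * (x ^ 1 * exp (-(μt * x)))) * (t ^ 1 * exp (-((μt - lam) * t))) := by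
      intro x t
      have e1 : exp (-((μt - lam) * (t + x)))
          = exp (-((μt - lam) * t)) * exp (-((μt - lam) * x)) := by
        rw [← exp_add]; congr 1; ring
      have e2 : exp (-(μt * x)) = exp (-((μt - lam) * x)) * exp (-(lam * x)) := by
        rw [← exp_add]; congr 1; ring
      rw [e1, e2]; ring
    rw [hIt]
    simp_rw [this, aux_t_s3 _ _ ha]
    rw [integral_div, integral_const_mul, aux_int 1 _ hm0]
    simp
    field_simp
  have h2 : Ic = lam / (μc ^ 2 * (μc - lam)) + lam / (μt * μc * (μt + μc - lam)) := by
    rw [hIc]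
    by_cases hd : μt - μc = 0
    · have hcm : μc = μt := by linarith
      subst hcm
      rw [setIntegral_congr_fun (g := fun x =>
          (lam / (μc - lam) * (μc / (μc + μc - lam))) * (x ^ 1 * exp (-(μc * x)))
          + 0 * (x ^ 1 * exp (-(μc * x)))
          + (lam / (μc - lam) * (μc * (μc - lam) / (2 * μc - lam))) * (x ^ 2 * exp (-(μc * x))))
          measurableSet_Ioi ?_]
      · rw [aux_comb _ _ _ _ _ 0 hm0 hc0]
        have : μc + μc - lam = 2 * μc - lam := by ring
        rw [this]
        field_simp
        ring
      · intro x hx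
        simp only
        rw [aux_inner μc μc lam hlam ht hc g hg x x hx (by simp)]
        ring
    · rw [setIntegral_congr_fun (g := fun x =>
          (lam / (μc - lam) * (μt / (μt + μc - lam) - μt * (μt - lam) / (2 * μt - lam)
            * (1 / (μt - μc) + 1 / (μt + μc - lam)))) * (x ^ 1 * exp (-(μt * x)))
          + (lam / (μc - lam) * (μt * (μt - lam) / (2 * μt - lam)
            * (1 / (μt - μc) + 1 / (μt + μc - lam)))) * (x ^ 1 * exp (-(μc * x)))
          + 0 * (x ^ 2 * exp (-(μt * x))))
          measurableSet_Ioi ?_]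
      · rw [aux_comb _ _ _ _ _ 0 hm0 hc0]
        field_simp
        ring
      · intro x hx
        simp only
        rw [aux_inner μt μc lam hlam ht hc g hg x _ hx (aux_J _ x hd)]
        have e : exp (-(μc * x)) = exp (-(μt * x)) * exp ((μt - μc) * x) := by
          rw [← exp_add]; congr 1; ring
        rw [e]
        ring
  rw [h1, h2]
  field_simp
  ring
end

section
/- Let μ_t, μ_c be real numbers with 0 < μ_t < μ_c. Then 1/μ_t + 1/μ_c + 1/μ_t + ∫₀^∞ ∫₀^∞ t·(μ_c−μ_t)·exp(−(μ_c−μ_t)(t+y))·μ_t·exp(−μ_t y) dt dy = 2/μ_t + 1/μ_c + μ_t/(μ_c(μ_c−μ_t)); in particular the double integral equals μ_t/(μ_c(μ_c−μ_t)). -/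
open MeasureTheory Real Set

/-- Corollary 1: timeliness of information under the zero-wait policy in the
M/M/1–M/M/1 tandem. -/
theorem stmt_4 (μt μc : ℝ) (ht : 0 < μt) (hc : μt < μc) :
    (1 / μt + 1 / μc + 1 / μt + ∫ y in Ioi (0:ℝ), ∫ t in Ioi (0:ℝ),
        t * ((μc - μt) * exp (-((μc - μt) * (t + y)))) * (μt * exp (-(μt * y)))
      = 2 / μt + 1 / μc + μt / (μc * (μc - μt))) ∧
    (∫ y in Ioi (0:ℝ), ∫ t in Ioi (0:ℝ),
        t * ((μc - μt) * exp (-((μc - μt) * (t + y)))) * (μt * exp (-(μt * y)))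
      = μt / (μc * (μc - μt))) := by
  have hd : 0 < μc - μt := sub_pos.mpr hc
  have hc0 : 0 < μc := ht.trans hc
  have h1 : ∫ t in Ioi (0:ℝ), t * exp (-((μc - μt) * t)) = 1 / (μc - μt) ^ 2 := by
    have h := integral_rpow_mul_exp_neg_mul_Ioi (a := 2) (r := μc - μt) (by norm_num) hd
    have e : (2:ℝ) - 1 = 1 := by norm_num
    simp only [e, rpow_one, rpow_two, Real.Gamma_two, mul_one] at h
    rw [h, div_pow, one_pow]
  have h2 : ∫ y in Ioi (0:ℝ), exp (-μc * y) = 1 / μc := by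
    rw [integral_exp_mul_Ioi (by linarith) 0]
    simp
  have key : ∫ y in Ioi (0:ℝ), ∫ t in Ioi (0:ℝ),
        t * ((μc - μt) * exp (-((μc - μt) * (t + y)))) * (μt * exp (-(μt * y)))
      = μt / (μc * (μc - μt)) := by
    have h3 : ∀ y : ℝ, ∫ t in Ioi (0:ℝ),
        t * ((μc - μt) * exp (-((μc - μt) * (t + y)))) * (μt * exp (-(μt * y)))
        = ((μc - μt) * μt * (1 / (μc - μt) ^ 2)) * exp (-μc * y) := by
      intro y
      have h4 : ∀ t : ℝ,
          t * ((μc - μt) * exp (-((μc - μt) * (t + y)))) * (μt * exp (-(μt * y)))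
          = ((μc - μt) * μt * exp (-μc * y)) * (t * exp (-((μc - μt) * t))) := by
        intro t
        have e1 : exp (-((μc - μt) * (t + y))) * exp (-(μt * y))
            = exp (-μc * y) * exp (-((μc - μt) * t)) := by
          rw [← Real.exp_add, ← Real.exp_add]
          congr 1
          ring
        linear_combination (t * (μc - μt) * μt) * e1
      simp_rw [h4]
      rw [integral_const_mul, h1]
      ring
    simp_rw [h3]
    rw [integral_const_mul, h2]
    field_simp
  refine ⟨?_, key⟩
  rw [key]
  ring
end

section
/- Let σ > 0, κ > 0 and μ_t, μ_c, λ with 0 < λ < μ_t, λ < μ_c and μ_t ≠ μ_c; set a = μ_t − λ and b = μ_c − λ. For x, s > 0 define P0(x,s) = (a/(μ_t−μ_c))·exp(−b s)·(exp(−a x) − exp(−b x)) − exp(−a x) + 1 and F(x,s) = ∫₀^∞ exp(−κ t)·[ (a/(μ_t−μ_c))·exp(−b s)·( b·exp(−b(x+t)) − a·exp(−a(x+t)) ) + a·exp(−a(x+t)) ] dt. Set A = a·b/((κ+a)(κ+b)) and B = (μ_c/(κ+μ_c)) · ∫₀^∞ ∫₀^∞ exp(−κ(x+s))·(P0(x,s)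 + F(x,s))·λ·exp(−λ x)·μ_t·exp(−μ_t s) dx ds. Then σ² − (σ²λ/κ)·(A − B) = σ² − σ²·λ·a·b/(κ(κ+a)(κ+b)) + (σ²·λ²·μ_t·μ_c/((κ+μ_t)(κ+μ_c))) · [ 1/(κ(κ+λ)) − 1/((κ+a)(κ+b)) + λ/((κ+b)(κ+a)(κ+μ_t+μ_c−λ)) − b/((κ+a)(κ+μ_t)(κ+μ_t+μ_c−λ)) − a/((κ+b)(κ+μ_c)(κ+μ_t+μ_c−λ)) ]. -/
open MeasureTheory Real Set

lemma aux_int_s9 {p : ℝ} (hp : 0 < p) :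
    IntegrableOn (fun t : ℝ => exp (-(p * t))) (Ioi 0) := by
  simpa [neg_mul] using integrableOn_exp_mul_Ioi (a := -p) (by linarith) 0

lemma aux_val {p : ℝ} (hp : 0 < p) :
    ∫ t in Ioi (0:ℝ), exp (-(p * t)) = 1 / p := by
  have h := integral_exp_mul_Ioi (a := -p) (by linarith) 0
  simpa [neg_mul, neg_div_neg_eq] using h

lemma aux_three {p q r : ℝ} (hp : 0 < p) (hq : 0 < q) (hr : 0 < r) (u v w : ℝ) :
    ∫ t in Ioi (0:ℝ), (u * exp (-(p * t)) + v * exp (-(q * t)) + w * exp (-(r * t)))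
      = u / p + v / q + w / r := by
  have h1 := (aux_int_s9 hp).const_mul u
  have h2 := (aux_int_s9 hq).const_mul v
  have h3 := (aux_int_s9 hr).const_mul w
  have h12 : Integrable (fun t : ℝ => u * exp (-(p * t)) + v * exp (-(q * t)))
      (volume.restrict (Ioi 0)) := h1.add h2
  rw [integral_add h12 h3, integral_add h1 h2, integral_const_mul,
    integral_const_mul, integral_const_mul, aux_val hp, aux_val hq, aux_val hr]
  ring

/-- Proposition 2: closed form of the process-related timeliness of information
for the M/M/1–M/M/1 tandem with a stationary Gauss–Markov source. -/
theorem stmt_9 (σ κ μt μc lam : ℝ) (hσ : 0 < σ) (hκ : 0 < κ)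
    (hlam : 0 < lam) (ht : lam < μt) (hc : lam < μc) (hne : μt ≠ μc)
    (a b : ℝ) (ha : a = μt - lam) (hb : b = μc - lam)
    (P0 F : ℝ → ℝ → ℝ)
    (hP0 : ∀ x s : ℝ, 0 < x → 0 < s →
      P0 x s = a / (μt - μc) * exp (-(b * s)) * (exp (-(a * x)) - exp (-(b * x)))
        - exp (-(a * x)) + 1)
    (hF : ∀ x s : ℝ, 0 < x → 0 < s →
      F x s = ∫ t in Ioi (0:ℝ), exp (-(κ * t)) *
        (a / (μt - μc) * exp (-(b * s))
            * (b * exp (-(b * (x + t))) - a * exp (-(a * (x + t))))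
          + a * exp (-(a * (x + t)))))
    (A B : ℝ)
    (hA : A = a * b / ((κ + a) * (κ + b)))
    (hB : B = μc / (κ + μc) *
      ∫ s in Ioi (0:ℝ), ∫ x in Ioi (0:ℝ),
        exp (-(κ * (x + s))) * (P0 x s + F x s) * (lam * exp (-(lam * x)))
          * (μt * exp (-(μt * s)))) :
    σ ^ 2 - σ ^ 2 * lam / κ * (A - B)
      = σ ^ 2 - σ ^ 2 * lam * a * b / (κ * (κ + a) * (κ + b))
        + σ ^ 2 * lam ^ 2 * μt * μc / ((κ + μt) * (κ + μc)) *
          (1 / (κ * (κ + lam)) - 1 / ((κ + a) * (κ + b))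
            + lam / ((κ + b) * (κ + a) * (κ + μt + μc - lam))
            - b / ((κ + a) * (κ + μt) * (κ + μt + μc - lam))
            - a / ((κ + b) * (κ + μc) * (κ + μt + μc - lam))) := by
  have ha0 : 0 < a := by linarith
  have hb0 : 0 < b := by linarith
  have hμt : 0 < μt := by linarith
  have hμc : 0 < μc := by linarith
  set c := a / (μt - μc) with hcdef
  have hF' : ∀ x s : ℝ, 0 < x → 0 < s → F x s =
      c * exp (-(b * s)) * (b * exp (-(b * x)) / (κ + b) - a * exp (-(a * x)) / (κ + a))
        + a * exp (-(a * x)) / (κ + a) := by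
    intro x s hx hs
    rw [hF x s hx hs]
    have h := aux_three (p := κ + b) (q := κ + a) (r := κ + a) (by linarith) (by linarith)
      (by linarith) (c * exp (-(b * s)) * (b * exp (-(b * x))))
      (-(c * exp (-(b * s)) * (a * exp (-(a * x))))) (a * exp (-(a * x)))
    trans
    · refine Eq.trans (integral_congr_ae (Filter.Eventually.of_forall fun t => ?_)) h
      have e1 : exp (-((κ + b) * t)) = exp (-(κ * t)) * exp (-(b * t)) := by
        rw [← exp_add]; ring_nf
      have e2 : exp (-((κ + a) * t)) = exp (-(κ * t)) * exp (-(a * t)) := by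
        rw [← exp_add]; ring_nf
      have e3 : exp (-(b * (x + t))) = exp (-(b * x)) * exp (-(b * t)) := by
        rw [← exp_add]; ring_nf
      have e4 : exp (-(a * (x + t))) = exp (-(a * x)) * exp (-(a * t)) := by
        rw [← exp_add]; ring_nf
      simp only [e1, e2, e3, e4]
      ring
    · ring
  have hx : ∀ s : ℝ, 0 < s → (∫ x in Ioi (0:ℝ),
        exp (-(κ * (x + s))) * (P0 x s + F x s) * (lam * exp (-(lam * x)))
          * (μt * exp (-(μt * s)))) =
      (lam * μt * c * κ * (1 / ((κ + a) * (κ + μt)) - 1 / ((κ + b) * (κ + μc))))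
          * exp (-((κ + μt + b) * s))
        + (lam * μt * (1 / (κ + lam) - κ / ((κ + a) * (κ + μt)))) * exp (-((κ + μt) * s))
        + 0 * exp (-((κ + μt) * s)) := by
    intro s hs
    have h := aux_three (p := κ + μt) (q := κ + μc) (r := κ + lam) (by linarith) (by linarith)
      (by linarith)
      (exp (-(κ * s)) * exp (-(μt * s)) * lam * μt * (c * exp (-(b * s)) - 1) * (κ / (κ + a)))
      (-(exp (-(κ * s)) * exp (-(μt * s)) * lam * μt * (c * exp (-(b * s))) * (κ / (κ + b))))
      (exp (-(κ * s)) * exp (-(μt * s)) * lam * μt)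
    have ka : κ / (κ + a) = 1 - a / (κ + a) := by field_simp; ring
    have kb : κ / (κ + b) = 1 - b / (κ + b) := by field_simp; ring
    trans
    · refine Eq.trans (setIntegral_congr_fun measurableSet_Ioi fun x hx => ?_) h
      have hx0 : 0 < x := hx
      have e1 : exp (-((κ + μt) * x)) = exp (-(κ * x)) * exp (-(a * x)) * exp (-(lam * x)) := by
        rw [← exp_add, ← exp_add, ha]; ring_nf
      have e2 : exp (-((κ + μc) * x)) = exp (-(κ * x)) * exp (-(b * x)) * exp (-(lam * x)) := by
        rw [← exp_add, ← exp_add, hb]; ring_nf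
      have e3 : exp (-((κ + lam) * x)) = exp (-(κ * x)) * exp (-(lam * x)) := by
        rw [← exp_add]; ring_nf
      have e4 : exp (-(κ * (x + s))) = exp (-(κ * x)) * exp (-(κ * s)) := by
        rw [← exp_add]; ring_nf
      simp only [hP0 x s hx0 hs, hF' x s hx0 hs, e1, e2, e3, e4, ka, kb]
      ring
    · have e1 : exp (-((κ + μt + b) * s))
          = exp (-(κ * s)) * exp (-(μt * s)) * exp (-(b * s)) := by
        rw [← exp_add, ← exp_add]; ring_nf
      have e2 : exp (-((κ + μt) * s)) = exp (-(κ * s)) * exp (-(μt * s)) := by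
        rw [← exp_add]; ring_nf
      rw [e1, e2]
      field_simp
      ring
  rw [setIntegral_congr_fun measurableSet_Ioi (fun s hs => hx s hs),
    aux_three (by linarith) (by linarith) (by linarith)] at hB
  have hd : μt - μc ≠ 0 := sub_ne_zero.mpr hne
  have hD : κ + μt + μc - lam ≠ 0 := by
    have : 0 < κ + μt + μc - lam := by linarith
    exact this.ne'
  have hD2 : κ + μt + b = κ + μt + μc - lam := by rw [hb]; ring
  rw [hD2] at hB
  rw [hB, hA, hcdef]
  have h1 : κ + a ≠ 0 := by positivity
  have h2 : κ + b ≠ 0 := by positivity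
  have et : μt = a + lam := by linarith
  have ec : μc = b + lam := by linarith
  clear_value c
  clear hx hF' hF hP0 hB hA hcdef ha hb hD2
  subst et ec
  have hab : a - b ≠ 0 := by
    intro h; apply hd; linarith
  have r1 : a + lam - (b + lam) = a - b := by ring
  have r2 : κ + (a + lam) + (b + lam) - lam = κ + a + b + lam := by ring
  rw [r1, r2]
  field_simp
  ring
end

section
/- Let σ > 0, κ > 0, and μ_t, μ_c with 0 < μ_t < μ_c. Let E1 = ∫₀^∞ exp(−κt)·(∫₀^t μ_t·exp(−μ_t u)·(μ_c−μ_t)·exp(−(μ_c−μ_t)(t−u)) du) dt and E2 = ∫₀^∞ exp(−κy)·(∫₀^∞ exp(−κt)·(μ_c−μ_t)·exp(−(μ_c−μ_t)(t+y)) dt)·μ_t·exp(−μ_t y) dy. Then σ² − (σ²μ_t/κ)·( E1 − E2·(μ_t/(κ+μ_t))·(μ_c/(κ+μ_c)) ) = σ² − σ²·μ_t²·(μ_c−μ_t)/(κ(κ+μ_t)(κ+μ_c−μ_t)) + σ²·μ_t³·μ_c·(μ_c−μ_t)/(κ(κ+μ_t)(κ+μ_c)²(κ+μ_c−μ_t)).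 -/
open MeasureTheory Real Set intervalIntegral

lemma aux_int_s10 (c : ℝ) (hc : 0 < c) : ∫ t in Ioi (0:ℝ), exp (-(c * t)) = 1 / c := by
  have h := integral_exp_mul_Ioi (a := -c) (by linarith) 0
  simp only [neg_mul] at h
  rw [h]; simp

lemma aux_intble (c : ℝ) (hc : 0 < c) : IntegrableOn (fun t : ℝ => exp (-(c * t))) (Ioi 0) := by
  have h := integrableOn_exp_mul_Ioi (a := -c) (by linarith) 0
  simpa only [neg_mul] using h

lemma aux_int2 (c : ℝ) (hc : 0 < c) : ∫ t in Ioi (0:ℝ), t * exp (-(c * t)) = 1 / c ^ 2 := by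
  have h := Real.integral_rpow_mul_exp_neg_mul_Ioi (a := 2) (r := c) (by norm_num) hc
  have h2 : (2:ℝ) - 1 = 1 := by norm_num
  rw [h2] at h
  simp only [rpow_one] at h
  rw [h, Real.Gamma_two]
  simp

lemma aux_E1 (κ a b : ℝ) (hκ : 0 < κ) (ha : 0 < a) (hb : 0 < b) :
    (∫ t in Ioi (0:ℝ), exp (-(κ * t)) *
      ∫ u in (0:ℝ)..t, a * exp (-(a * u)) * (b * exp (-(b * (t - u)))))
      = a * b / ((κ + a) * (κ + b)) := by
  have e : ∀ t u : ℝ, a * exp (-(a * u)) * (b * exp (-(b * (t - u))))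
      = a * b * exp (-(b * t)) * exp ((b - a) * u) := by
    intro t u
    rw [mul_assoc (a * b), ← exp_add,
      show -(b * t) + (b - a) * u = -(a * u) + -(b * (t - u)) by ring, exp_add]
    ring
  simp only [e, intervalIntegral.integral_const_mul]
  by_cases hab : b = a
  · subst hab
    have : ∀ t : ℝ, exp (-(κ * t)) * (b * b * exp (-(b * t)) *
        ∫ u in (0:ℝ)..t, exp ((b - b) * u)) = b * b * (t * exp (-((κ + b) * t))) := by
      intro t
      rw [show -((κ + b) * t) = -(κ * t) + -(b * t) by ring, exp_add]
      simp
      ring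
    simp only [this, MeasureTheory.integral_const_mul]
    rw [aux_int2 _ (by linarith)]
    field_simp
  · have hne : b - a ≠ 0 := sub_ne_zero.2 hab
    have hI : ∀ t : ℝ, ∫ u in (0:ℝ)..t, exp ((b - a) * u) = (exp ((b - a) * t) - 1) / (b - a) := by
      intro t
      rw [intervalIntegral.integral_comp_mul_left (fun x => exp x) hne, integral_exp]
      simp
      field_simp
    have : ∀ t : ℝ, exp (-(κ * t)) * (a * b * exp (-(b * t)) *
        ∫ u in (0:ℝ)..t, exp ((b - a) * u))
        = a * b / (b - a) * (exp (-((κ + a) * t)) - exp (-((κ + b) * t))) := by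
      intro t
      rw [hI, show -((κ + b) * t) = -(κ * t) + -(b * t) by ring,
        show -((κ + a) * t) = -(κ * t) + -(b * t) + (b - a) * t by ring]
      simp only [exp_add]
      field_simp
    simp only [this, MeasureTheory.integral_const_mul]
    rw [integral_sub (aux_intble _ (by linarith)) (aux_intble _ (by linarith)),
      aux_int_s10 _ (by linarith), aux_int_s10 _ (by linarith)]
    have h1 : κ + a ≠ 0 := by positivity
    have h2 : κ + b ≠ 0 := by positivity
    field_simp
    ring

lemma aux_E2 (κ a b : ℝ) (hκ : 0 < κ) (ha : 0 < a) (hb : 0 < b) :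
    (∫ y in Ioi (0:ℝ), exp (-(κ * y)) *
          (∫ t in Ioi (0:ℝ), exp (-(κ * t)) * (b * exp (-(b * (t + y)))))
          * (a * exp (-(a * y)))) = a * b / ((κ + b) * (κ + a + b)) := by
  have e : ∀ y t : ℝ, exp (-(κ * t)) * (b * exp (-(b * (t + y))))
      = b * exp (-(b * y)) * exp (-((κ + b) * t)) := by
    intro y t
    rw [mul_assoc b, ← exp_add,
      show -(b * y) + -((κ + b) * t) = -(κ * t) + -(b * (t + y)) by ring, exp_add]
    ring
  simp only [e, MeasureTheory.integral_const_mul]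
  rw [aux_int_s10 _ (by linarith)]
  have : ∀ y : ℝ, exp (-(κ * y)) * (b * exp (-(b * y)) * (1 / (κ + b))) * (a * exp (-(a * y)))
      = a * b / (κ + b) * exp (-((κ + a + b) * y)) := by
    intro y
    rw [show -((κ + a + b) * y) = -(κ * y) + -(b * y) + -(a * y) by ring]
    simp only [exp_add]
    ring
  simp only [this, MeasureTheory.integral_const_mul]
  rw [aux_int_s10 _ (by linarith)]
  field_simp


/-- Corollary 2: process-related timeliness of information under the zero-wait
policy in the M/M/1–M/M/1 tandem. -/
theorem stmt_10 (σ κ μt μc : ℝ) (hσ : 0 < σ) (hκ : 0 < κ) (ht : 0 < μt) (hc : μt < μc)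
    (E1 E2 : ℝ)
    (hE1 : E1 = ∫ t in Ioi (0:ℝ), exp (-(κ * t)) *
        ∫ u in (0:ℝ)..t, μt * exp (-(μt * u)) * ((μc - μt) * exp (-((μc - μt) * (t - u)))))
    (hE2 : E2 = ∫ y in Ioi (0:ℝ),
        exp (-(κ * y)) *
          (∫ t in Ioi (0:ℝ), exp (-(κ * t)) * ((μc - μt) * exp (-((μc - μt) * (t + y)))))
          * (μt * exp (-(μt * y)))) :
    σ ^ 2 - σ ^ 2 * μt / κ * (E1 - E2 * (μt / (κ + μt)) * (μc / (κ + μc)))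
      = σ ^ 2 - σ ^ 2 * μt ^ 2 * (μc - μt) / (κ * (κ + μt) * (κ + μc - μt))
        + σ ^ 2 * μt ^ 3 * μc * (μc - μt)
            / (κ * (κ + μt) * (κ + μc) ^ 2 * (κ + μc - μt)) := by
  have hb : 0 < μc - μt := by linarith
  rw [aux_E1 κ μt _ hκ ht hb] at hE1
  rw [aux_E2 κ μt _ hκ ht hb] at hE2
  obtain ⟨b, rfl⟩ : ∃ b, μc = μt + b := ⟨μc - μt, by ring⟩
  simp only [add_sub_cancel_left] at *
  rw [show κ + (μt + b) - μt = κ + b by ring, hE1, hE2, ← add_assoc]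
  field_simp
  ring
end

section
/- Let λ₁, λ₂, μ_t, μ_c be real numbers with 0 < λ₁ < μ_t, λ₂ ≥ 0 and λ₁ + λ₂ < μ_c. Then ( ∫₀^∞ (1/μ_t + y − (1 − exp(−(μ_t−λ₁)y))/(μ_t−λ₁)) · (μ_c−λ₂)·exp(−(μ_c−λ₂)y) dy ) · ( ∫₀^∞ t·(μ_c−λ₁−λ₂)·exp(−(μ_c−λ₁−λ₂)t) dt ) = (1/(μ_c−λ₁−λ₂)) · [ 1/(μ_c−λ₂) − λ₁/(μ_t(μ_t−λ₁)) + (μ_c−λ₂)/((μ_t−λ₁)(μ_t+μ_c−λ₁−λ₂)) ]. -/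
open MeasureTheory Real Set

lemma aux_int0 {a : ℝ} (ha : 0 < a) :
    IntegrableOn (fun x : ℝ => exp (-(a * x))) (Ioi 0) := by
  have := exp_neg_integrableOn_Ioi 0 ha
  simpa only [neg_mul] using this

lemma aux_val0 {a : ℝ} (ha : 0 < a) :
    ∫ x in Ioi (0:ℝ), exp (-(a * x)) = 1 / a := by
  have := integral_exp_mul_Ioi (a := -a) (by linarith) 0
  simp only [neg_mul, mul_zero, exp_zero, neg_div_neg_eq] at this
  exact this

lemma aux_int1 {a : ℝ} (ha : 0 < a) :
    IntegrableOn (fun x : ℝ => x * exp (-(a * x))) (Ioi 0) := by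
  have := integrableOn_rpow_mul_exp_neg_mul_rpow (s := 1) (p := 1) (by norm_num) one_pos ha
  simpa only [neg_mul, rpow_one] using this

lemma aux_val1 {a : ℝ} (ha : 0 < a) :
    ∫ x in Ioi (0:ℝ), x * exp (-(a * x)) = 1 / a ^ 2 := by
  have := integral_rpow_mul_exp_neg_mul_rpow (q := 1) (p := 1) one_pos (by norm_num) ha
  simp only [neg_mul, rpow_one] at this
  rw [this]
  norm_num

/-- Lemma 5: E[X_{i,n} W'_{i,n,c} | I_n] as a product of conditional expectations. -/
theorem stmt_13 (lam1 lam2 μt μc : ℝ) (h1 : 0 < lam1) (ht : lam1 < μt)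
    (h2 : 0 ≤ lam2) (hc : lam1 + lam2 < μc) :
    (∫ y in Ioi (0:ℝ),
        (1 / μt + y - (1 - exp (-((μt - lam1) * y))) / (μt - lam1))
          * ((μc - lam2) * exp (-((μc - lam2) * y))))
      * (∫ t in Ioi (0:ℝ), t * ((μc - lam1 - lam2) * exp (-((μc - lam1 - lam2) * t))))
      = 1 / (μc - lam1 - lam2) *
          (1 / (μc - lam2) - lam1 / (μt * (μt - lam1))
            + (μc - lam2) / ((μt - lam1) * (μt + μc - lam1 - lam2))) := by
  have hb : 0 < μt - lam1 := by linarith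
  have ha : 0 < μc - lam2 := by linarith
  have hd : 0 < μc - lam1 - lam2 := by linarith
  have hm : 0 < μt := by linarith
  have hs : μt + μc - lam1 - lam2 = (μt - lam1) + (μc - lam2) := by ring
  have hl : lam1 = μt - (μt - lam1) := by ring
  have hW : (∫ t in Ioi (0:ℝ), t * ((μc - lam1 - lam2) * exp (-((μc - lam1 - lam2) * t))))
      = 1 / (μc - lam1 - lam2) := by
    have : ∀ t : ℝ, t * ((μc - lam1 - lam2) * exp (-((μc - lam1 - lam2) * t)))
      = (μc - lam1 - lam2) * (t * exp (-((μc - lam1 - lam2) * t))) := fun t => by ring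
    simp_rw [this]
    rw [integral_const_mul, aux_val1 hd]
    field_simp
  have hq : lam1 / (μt * (μt - lam1)) = 1 / (μt - lam1) - 1 / μt := by
    field_simp
    ring
  rw [hW, mul_comm, hs, hq]
  congr 1
  generalize μt - lam1 = b at *
  generalize μc - lam2 = a at *
  have hab : 0 < b + a := by linarith
  have : ∀ y : ℝ, (1 / μt + y - (1 - exp (-(b * y))) / b) * (a * exp (-(a * y)))
      = ((1 / μt - 1 / b) * a) * exp (-(a * y)) + a * (y * exp (-(a * y)))
        + (a / b) * exp (-((b + a) * y)) := fun y => by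
    rw [show -((b + a) * y) = -(b * y) + -(a * y) by ring, exp_add]
    ring
  simp_rw [this]
  have i0 := (aux_int0 ha).const_mul ((1 / μt - 1 / b) * a)
  have i1 := (aux_int1 ha).const_mul a
  have i2 := (aux_int0 hab).const_mul (a / b)
  have i01 : Integrable (fun x => (1 / μt - 1 / b) * a * exp (-(a * x)) + a * (x * exp (-(a * x))))
      (volume.restrict (Ioi 0)) := i0.add i1
  rw [integral_add i01 i2, integral_add i0 i1, integral_const_mul, integral_const_mul,
    integral_const_mul, aux_val0 ha, aux_val1 ha, aux_val0 hab]
  field_simp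
  ring
end

section
/- Let λ₁, λ₂, μ_t, μ_c be real numbers with 0 < λ₁ < μ_t, λ₂ ≥ 0 and λ₁ + λ₂ < μ_c. Then ∫₀^∞ (1/μ_t + y − (1 − exp(−(μ_t−λ₁)y))/(μ_t−λ₁)) · λ₁·exp(−λ₁ y)·(1 − exp(−(μ_c−λ₁−λ₂)y)) · ((μ_c−λ₂)/(μ_c−λ₁−λ₂)) dy = 1/λ₁ + 1/(μ_c−λ₂) − λ₁/(μ_t(μ_t+μ_c−λ₁−λ₂)). -/
open MeasureTheory Real Set

lemma aux_exp_int {b : ℝ} (hb : 0 < b) :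
    IntegrableOn (fun y : ℝ => exp (-(b * y))) (Ioi 0) ∧
      ∫ y in Ioi (0:ℝ), exp (-(b * y)) = 1 / b := by
  have e1 := integrableOn_exp_mul_Ioi (neg_lt_zero.mpr hb) 0
  have e2 := integral_exp_mul_Ioi (neg_lt_zero.mpr hb) 0
  simp only [neg_mul, mul_zero, neg_zero, exp_zero] at e1 e2
  refine ⟨e1, ?_⟩
  rw [e2, neg_div_neg_eq]

lemma aux_yexp_int {b : ℝ} (hb : 0 < b) :
    IntegrableOn (fun y : ℝ => y * exp (-(b * y))) (Ioi 0) ∧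
      ∫ y in Ioi (0:ℝ), y * exp (-(b * y)) = 1 / b ^ 2 := by
  have e1 := integrableOn_rpow_mul_exp_neg_mul_rpow (p := 1) (s := 1) (by norm_num) one_pos hb
  have e2 := integral_rpow_mul_exp_neg_mul_Ioi (a := 2) two_pos hb
  norm_num [Gamma_two] at e1 e2
  exact ⟨e1, by rw [e2]; simp⟩

/-- Equation (46): E[X_{i,n} | L_n] for the multi-source computation queue. -/
theorem stmt_14 (lam1 lam2 μt μc : ℝ) (h1 : 0 < lam1) (ht : lam1 < μt)
    (h2 : 0 ≤ lam2) (hc : lam1 + lam2 < μc) :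
    ∫ y in Ioi (0:ℝ),
        (1 / μt + y - (1 - exp (-((μt - lam1) * y))) / (μt - lam1))
          * (lam1 * exp (-(lam1 * y)) * (1 - exp (-((μc - lam1 - lam2) * y)))
              * ((μc - lam2) / (μc - lam1 - lam2)))
      = 1 / lam1 + 1 / (μc - lam2) - lam1 / (μt * (μt + μc - lam1 - lam2)) := by
  obtain ⟨d, rfl⟩ : ∃ d, μt = lam1 + d := ⟨μt - lam1, by ring⟩
  obtain ⟨m, rfl⟩ : ∃ m, μc = lam1 + lam2 + m := ⟨μc - lam1 - lam2, by ring⟩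
  have hd : 0 < d := by linarith
  have hm : 0 < m := by linarith
  rw [show lam1 + d - lam1 = d by ring, show lam1 + lam2 + m - lam1 - lam2 = m by ring,
    show lam1 + lam2 + m - lam2 = lam1 + m by ring,
    show lam1 + d + (lam1 + lam2 + m) - lam1 - lam2 = lam1 + d + m by ring]
  obtain ⟨i1, v1⟩ := aux_exp_int h1
  obtain ⟨i2, v2⟩ := aux_exp_int (add_pos h1 hm)
  obtain ⟨i3, v3⟩ := aux_exp_int (add_pos h1 hd)
  obtain ⟨i4, v4⟩ := aux_exp_int (add_pos (add_pos h1 hd) hm)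
  obtain ⟨i5, v5⟩ := aux_yexp_int h1
  obtain ⟨i6, v6⟩ := aux_yexp_int (add_pos h1 hm)
  have key : ∀ y : ℝ, (1 / (lam1 + d) + y - (1 - exp (-(d * y))) / d)
          * (lam1 * exp (-(lam1 * y)) * (1 - exp (-(m * y))) * ((lam1 + m) / m))
      = lam1 * ((lam1 + m) / m) * ((1 / (lam1 + d) - 1 / d) *
          (exp (-(lam1 * y)) - exp (-((lam1 + m) * y)))
        + (y * exp (-(lam1 * y)) - y * exp (-((lam1 + m) * y)))
        + 1 / d * (exp (-((lam1 + d) * y)) - exp (-((lam1 + d + m) * y)))) := by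
    intro y
    rw [show -((lam1 + m) * y) = -(lam1 * y) + -(m * y) by ring,
      show -((lam1 + d) * y) = -(lam1 * y) + -(d * y) by ring,
      show -((lam1 + d + m) * y) = -(lam1 * y) + -(d * y) + -(m * y) by ring]
    simp only [exp_add]
    ring
  simp_rw [key]
  have j1 := (i1.sub i2).const_mul (1 / (lam1 + d) - 1 / d)
  have j2 : Integrable (fun y : ℝ => y * exp (-(lam1 * y)) - y * exp (-((lam1 + m) * y)))
      (volume.restrict (Ioi 0)) := i5.sub i6
  have j3 := (i3.sub i4).const_mul (1 / d)
  simp only [Pi.sub_apply] at j1 j3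
  have j12 : Integrable (fun y : ℝ => (1 / (lam1 + d) - 1 / d) *
          (exp (-(lam1 * y)) - exp (-((lam1 + m) * y)))
        + (y * exp (-(lam1 * y)) - y * exp (-((lam1 + m) * y))))
      (volume.restrict (Ioi 0)) := j1.add j2
  rw [integral_const_mul, integral_add j12 j3, integral_add j1 j2,
    integral_const_mul, integral_const_mul, integral_sub i1 i2, integral_sub i3 i4,
    integral_sub i5 i6, v1, v2, v3, v4, v5, v6]
  have : lam1 + d ≠ 0 := by positivity
  have : lam1 + m ≠ 0 := by positivity
  have : lam1 + d + m ≠ 0 := by positivity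
  field_simp
  ring
end

section
/- Let μ_t, μ_c > 0 be fixed real numbers. The function f(λ) = λ²/(μ_t²(μ_t−λ)) + 1/μ_t + λ²/(μ_c²(μ_c−λ)) + 1/μ_c + λ²/(μ_t μ_c (μ_t+μ_c−λ)) + 1/λ is strictly convex on the open interval (0, min(μ_t, μ_c)). -/
open Set

lemma qol_aux (a b X Y U V : ℝ) (ha : 0 < a) (hb : 0 < b) (hU : 0 < U) (hV : 0 < V) :
    a * (X ^ 2 / U) + b * (Y ^ 2 / V) - (a * X + b * Y) ^ 2 / (a * U + b * V)
      = a * b * (X * V - Y * U) ^ 2 / (U * V * (a * U + b * V)) := by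
  have h : 0 < a * U + b * V := by positivity
  have := h.ne'
  field_simp
  ring

lemma qol_le (a b x y k m : ℝ) (ha : 0 < a) (hb : 0 < b) (hab : a + b = 1) (hk : 0 < k)
    (hx : x < m) (hy : y < m) :
    (a * x + b * y) ^ 2 / (k * (m - (a * x + b * y)))
      ≤ a * (x ^ 2 / (k * (m - x))) + b * (y ^ 2 / (k * (m - y))) := by
  have hU : 0 < k * (m - x) := mul_pos hk (by linarith)
  have hV : 0 < k * (m - y) := mul_pos hk (by linarith)
  have e : k * (m - (a * x + b * y)) = a * (k * (m - x)) + b * (k * (m - y)) := by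
    obtain rfl : b = 1 - a := by linarith
    ring
  have h := qol_aux a b x y _ _ ha hb hU hV
  rw [e]
  have : 0 ≤ a * b * (x * (k * (m - y)) - y * (k * (m - x))) ^ 2 /
    ((k * (m - x)) * (k * (m - y)) * (a * (k * (m - x)) + b * (k * (m - y)))) := by positivity
  linarith

/-- Appendix E, part 1: the timeliness of information of Proposition 1 is strictly
convex in the task generation rate λ on (0, min(μ_t, μ_c)). -/
theorem stmt_17 (μt μc : ℝ) (ht : 0 < μt) (hc : 0 < μc) :
    StrictConvexOn ℝ (Ioo (0:ℝ) (min μt μc))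
      (fun lam : ℝ =>
        lam ^ 2 / (μt ^ 2 * (μt - lam)) + 1 / μt + lam ^ 2 / (μc ^ 2 * (μc - lam))
          + 1 / μc + lam ^ 2 / (μt * μc * (μt + μc - lam)) + 1 / lam) := by
  refine ⟨convex_Ioo _ _, ?_⟩
  rintro x ⟨hx0, hx⟩ y ⟨hy0, hy⟩ hxy a b ha hb hab
  obtain ⟨hxt, hxc⟩ := lt_min_iff.1 hx
  obtain ⟨hyt, hyc⟩ := lt_min_iff.1 hy
  simp only [smul_eq_mul]
  have h1 := qol_le a b x y (μt ^ 2) μt ha hb hab (by positivity) hxt hyt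
  have h2 := qol_le a b x y (μc ^ 2) μc ha hb hab (by positivity) hxc hyc
  have h3 := qol_le a b x y (μt * μc) (μt + μc) ha hb hab (by positivity)
    (by linarith) (by linarith)
  have h4 := qol_aux a b 1 1 x y ha hb hx0 hy0
  have h5 : 0 < a * b * (1 * y - 1 * x) ^ 2 / (x * y * (a * x + b * y)) := by
    have : 1 * y - 1 * x ≠ 0 := fun h => hxy (by linarith)
    positivity
  rw [← h4, mul_one, mul_one, hab, one_pow] at h5
  have e1 : 1 / μt = a * (1 / μt) + b * (1 / μt) := by rw [← add_mul, hab, one_mul]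
  have e2 : 1 / μc = a * (1 / μc) + b * (1 / μc) := by rw [← add_mul, hab, one_mul]
  linarith
end

section
/- Let λ > 0 be a fixed real number. The function f(u, v) = λ²/(u·v·(u+v−λ)) is strictly convex on the open convex set S = {(u, v) ∈ ℝ² : u > 0, v > 0, u + v > λ}. -/
lemma aux_exp (k x y z : ℝ) (hx : 0 < x) (hy : 0 < y) (hz : 0 < z) :
    k / (x * y * z) = k * Real.exp (-(Real.log x + Real.log y + Real.log z)) := by
  rw [Real.exp_neg, Real.exp_add, Real.exp_add, Real.exp_log hx, Real.exp_log hy,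
    Real.exp_log hz, div_eq_mul_inv]

lemma aux_pos (a b x y : ℝ) (ha : 0 < a) (hb : 0 < b) (hx : 0 < x) (hy : 0 < y) :
    0 < a * x + b * y := by positivity

lemma aux_log (a b x y : ℝ) (ha : 0 < a) (hb : 0 < b) (hab : a + b = 1)
    (hx : 0 < x) (hy : 0 < y) :
    a * Real.log x + b * Real.log y ≤ Real.log (a * x + b * y) := by
  simpa using strictConcaveOn_log_Ioi.concaveOn.2 (Set.mem_Ioi.2 hx) (Set.mem_Ioi.2 hy)
    ha.le hb.le hab

lemma aux_log_lt (a b x y : ℝ) (ha : 0 < a) (hb : 0 < b) (hab : a + b = 1)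
    (hx : 0 < x) (hy : 0 < y) (hne : x ≠ y) :
    a * Real.log x + b * Real.log y < Real.log (a * x + b * y) := by
  simpa using strictConcaveOn_log_Ioi.2 (Set.mem_Ioi.2 hx) (Set.mem_Ioi.2 hy) hne ha hb hab

/-- Appendix E, part 3: the coupling term λ²/(u·v·(u+v−λ)) is strictly convex on
{(u,v) : u > 0, v > 0, u + v > λ}. -/
theorem stmt_19 (lam : ℝ) (hlam : 0 < lam) :
    StrictConvexOn ℝ {p : ℝ × ℝ | 0 < p.1 ∧ 0 < p.2 ∧ lam < p.1 + p.2}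
      (fun p : ℝ × ℝ => lam ^ 2 / (p.1 * p.2 * (p.1 + p.2 - lam))) := by
  have key : ∀ (a b u v u' v' : ℝ), a + b = 1 →
      a * u + b * u' + (a * v + b * v') - lam = a * (u + v - lam) + b * (u' + v' - lam) := by
    intro a b u v u' v' hab
    linear_combination (-lam) * (1 - hab)
  constructor
  · rintro ⟨u, v⟩ ⟨hu, hv, hw⟩ ⟨u', v'⟩ ⟨hu', hv', hw'⟩ a b ha hb hab
    simp only [Set.mem_setOf_eq, Prod.smul_mk, Prod.mk_add_mk, smul_eq_mul] at *
    have hk := key a b u v u' v' hab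
    rcases ha.eq_or_lt with rfl | ha
    · obtain rfl : b = 1 := by linarith
      simpa using ⟨hu', hv', hw'⟩
    rcases hb.eq_or_lt with rfl | hb
    · obtain rfl : a = 1 := by linarith
      simpa using ⟨hu, hv, hw⟩
    have := aux_pos a b _ _ ha hb (sub_pos.2 hw) (sub_pos.2 hw')
    exact ⟨by positivity, by positivity, by linarith⟩
  · rintro ⟨u, v⟩ ⟨hu, hv, hw⟩ ⟨u', v'⟩ ⟨hu', hv', hw'⟩ hne a b ha hb hab
    simp only [Prod.smul_mk, Prod.mk_add_mk, smul_eq_mul] at *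
    rw [key a b u v u' v' hab]
    have hw := sub_pos.2 hw
    have hw' := sub_pos.2 hw'
    rw [aux_exp _ _ _ _ hu hv hw, aux_exp _ _ _ _ hu' hv' hw',
      aux_exp _ _ _ _ (aux_pos a b _ _ ha hb hu hu') (aux_pos a b _ _ ha hb hv hv')
        (aux_pos a b _ _ ha hb hw hw')]
    have l1 := aux_log a b u u' ha hb hab hu hu'
    have l2 := aux_log a b v v' ha hb hab hv hv'
    have l3 := aux_log a b _ _ ha hb hab hw hw'
    set g := -(Real.log u + Real.log v + Real.log (u + v - lam)) with hg
    set g' := -(Real.log u' + Real.log v' + Real.log (u' + v' - lam)) with hg'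
    have hE : Real.exp (a * g + b * g') ≤ a * Real.exp g + b * Real.exp g' := by
      simpa using convexOn_exp.2 (Set.mem_univ g) (Set.mem_univ g') ha.le hb.le hab
    have hlt : -(Real.log (a * u + b * u') + Real.log (a * v + b * v') +
        Real.log (a * (u + v - lam) + b * (u' + v' - lam))) < a * g + b * g' := by
      rw [hg, hg']
      by_cases h : u = u'
      · have h2 : v ≠ v' := fun h' => hne (by rw [h, h'])
        have := aux_log_lt a b v v' ha hb hab hv hv' h2
        linarith
      · have := aux_log_lt a b u u' ha hb hab hu hu' h
        linarith
    have h3 := mul_lt_mul_of_pos_left ((Real.exp_lt_exp.2 hlt).trans_le hE) (pow_pos hlam 2)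
    linarith
end
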